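/- arXiv:2303.12366 — 2 statements merged into one kernel-verified Lean document; each statement's English description precedes it below -/
import Mathlib

section
/- Let i, j, k be natural numbers and let L be a split-invariant ℂ-subspace of ℂ^i × ℂ^j with dim_ℂ L = k, and set d = dim_ℂ(L ∩ (ℂ^i × {0})). Then there exist unitary operators A of ℂ^i and B of ℂ^j (with respect to the standard Hermitian inner products) such that the product map A × B : ℂ^i × ℂ^j → ℂ^i × ℂ^j maps L onto the standard subspace L_d spanned by the standard basis vectors e_1, …, e_d, e_{i+1}, …, e_{i+k−d} of ℂ^{i+j}. -/
/-!
If `(x, y)` and `(-x, y)` lie in `L`, then so does half their difference `(x, 0)`. Hence `L` is a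
product `V × W`, where `dim V = d` and `dim W = k - d`. An isometry between two subspaces of the
same dimension extends to a unitary operator of the ambient space, so `V` and `W` can be moved
independently onto the spans of the first `d` and the first `k - d` basis vectors.
-/

open Module

section SplitInvariant

variable {R M N : Type*} [Ring R] [AddCommGroup M] [Module R M] [AddCommGroup N] [Module R N]

/-- Invariance of a submodule of `M × N` under the reflection `(x, y) ↦ (-x, y)`. -/
def IsSplitInvariant (L : Submodule R (M × N)) : Prop :=
  ∀ x y, (x, y) ∈ L → (-x, y) ∈ L

namespace IsSplitInvariant

variable {L : Submodule R (M × N)}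

theorem prodMk_zero_mem (hL : IsSplitInvariant L) (h2 : IsUnit (2 : R)) {x : M} {y : N}
    (hxy : (x, y) ∈ L) : (x, 0) ∈ L := by
  have hdouble : (2 : R) • (x, (0 : N)) = (x, y) - (-x, y) := by simp [two_smul]
  rw [← L.smul_mem_iff_of_isUnit h2, hdouble]
  exact L.sub_mem hxy (hL x y hxy)

theorem exists_eq_prod (hL : IsSplitInvariant L) (h2 : IsUnit (2 : R)) :
    ∃ (V : Submodule R M) (W : Submodule R N), L = V.prod W := by
  refine ⟨L.comap (.inl R M N), L.comap (.inr R M N), ?_⟩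
  ext ⟨x, y⟩
  simp only [Submodule.mem_prod, Submodule.mem_comap, LinearMap.inl_apply, LinearMap.inr_apply]
  constructor
  · intro hxy
    have hx := hL.prodMk_zero_mem h2 hxy
    exact ⟨hx, by simpa using L.sub_mem hxy hx⟩
  · rintro ⟨hx, hy⟩
    simpa using L.add_mem hx hy

end IsSplitInvariant

end SplitInvariant

/-- The span of the first `d` members of a finite family, or of the whole family if it has fewer
than `d` members. The two factors of `L_d` are `initialSpan` of the standard bases, with parameters
`d` and `k - d`. -/
def initialSpan (R : Type*) {M : Type*} [Semiring R] [AddCommMonoid M] [Module R M] {n : ℕ}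
    (v : Fin n → M) (d : ℕ) : Submodule R M :=
  Submodule.span R {x | ∃ a : Fin n, a.val < d ∧ x = v a}

section Finrank

variable {R M N : Type*} [Ring R] [StrongRankCondition R]
  [AddCommGroup M] [Module R M] [AddCommGroup N] [Module R N]

theorem finrank_submodule_prod (V : Submodule R M) (W : Submodule R N)
    [Module.Free R V] [Module.Free R W] [Module.Finite R V] [Module.Finite R W] :
    finrank R (V.prod W) = finrank R V + finrank R W := by
  have hrange : LinearMap.range (V.subtype.prodMap W.subtype) = V.prod W := by
    rw [LinearMap.range_prodMap, V.range_subtype, W.range_subtype]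
  rw [← hrange, LinearMap.finrank_range_of_inj
    (V.injective_subtype.prodMap W.injective_subtype), finrank_prod]

theorem finrank_initialSpan {n : ℕ} {v : Fin n → M} (hv : LinearIndependent R v) (d : ℕ) :
    finrank R (initialSpan R v d) = min n d := by
  have := nontrivial_of_invariantBasisNumber R
  have hrange : {x | ∃ a : Fin n, a.val < d ∧ x = v a} =
      Set.range (v ∘ ((↑) : {a : Fin n // a.val < d} → Fin n)) := by
    ext x
    simp [eq_comm]
  rw [initialSpan, hrange, finrank_span_eq_card (hv.comp _ Subtype.val_injective),
    Fintype.card_subtype, Fin.card_filter_val_lt]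

end Finrank

section Unitary

variable {𝕜 E F : Type*} [RCLike 𝕜]
  [NormedAddCommGroup E] [InnerProductSpace 𝕜 E] [NormedAddCommGroup F] [InnerProductSpace 𝕜 F]

theorem exists_linearIsometryEquiv_map_eq [FiniteDimensional 𝕜 E] {V W : Submodule 𝕜 E}
    (h : finrank 𝕜 V = finrank 𝕜 W) :
    ∃ A : E ≃ₗᵢ[𝕜] E, V.map A.toLinearEquiv.toLinearMap = W := by
  let φ : V ≃ₗᵢ[𝕜] W := (stdOrthonormalBasis 𝕜 V).equiv (stdOrthonormalBasis 𝕜 W) (finCongr h)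
  let f : V →ₗᵢ[𝕜] E := W.subtypeₗᵢ.comp φ.toLinearIsometry
  refine ⟨f.extend.toLinearIsometryEquiv rfl, Submodule.eq_of_le_of_finrank_eq ?_ ?_⟩
  · rintro _ ⟨x, hx, rfl⟩
    have hfx : f.extend x = φ ⟨x, hx⟩ := f.extend_apply ⟨x, hx⟩
    exact hfx ▸ (φ ⟨x, hx⟩).2
  · rw [LinearEquiv.finrank_map_eq, h]

theorem exists_linearIsometryEquiv_map_eq_initialSpan {n : ℕ} (b : Basis (Fin n) 𝕜 E)
    (V : Submodule 𝕜 E) :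
    ∃ A : E ≃ₗᵢ[𝕜] E,
      V.map A.toLinearEquiv.toLinearMap = initialSpan 𝕜 b (finrank 𝕜 V) := by
  have := b.finiteDimensional_of_finite
  have hV : finrank 𝕜 V ≤ n := by simpa [finrank_eq_card_basis b] using V.finrank_le
  refine exists_linearIsometryEquiv_map_eq ?_
  rw [finrank_initialSpan b.linearIndependent, min_eq_right hV]

theorem split_invariant_normal_form_general {i j k d : ℕ}
    (e : Basis (Fin i) 𝕜 E) (f : Basis (Fin j) 𝕜 F)
    {L : Submodule 𝕜 (E × F)} (hsplit : IsSplitInvariant L) (hdim : finrank 𝕜 L = k)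
    (hd : d = finrank 𝕜
      (L ⊓ Submodule.prod (⊤ : Submodule 𝕜 E) (⊥ : Submodule 𝕜 F) : Submodule 𝕜 (E × F))) :
    ∃ (A : E ≃ₗᵢ[𝕜] E) (B : F ≃ₗᵢ[𝕜] F),
      L.map (LinearMap.prodMap A.toLinearEquiv.toLinearMap B.toLinearEquiv.toLinearMap) =
        (initialSpan 𝕜 e d).prod (initialSpan 𝕜 f (k - d)) := by
  have := e.finiteDimensional_of_finite
  have := f.finiteDimensional_of_finite
  obtain ⟨V, W, rfl⟩ := hsplit.exists_eq_prod (.mk0 2 two_ne_zero)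
  have hV : d = finrank 𝕜 V := by
    rw [hd, Submodule.prod_inf_prod, inf_top_eq, inf_bot_eq, finrank_submodule_prod, finrank_bot,
      add_zero]
  have hW : k - d = finrank 𝕜 W := by
    rw [← hdim, finrank_submodule_prod, hV, Nat.add_sub_cancel_left]
  obtain ⟨A, hA⟩ := exists_linearIsometryEquiv_map_eq_initialSpan e V
  obtain ⟨B, hB⟩ := exists_linearIsometryEquiv_map_eq_initialSpan f W
  exact ⟨A, B, by rw [LinearMap.prodMap_map_prod, hA, hB, hW, hV]⟩

end Unitary

/-- A split-invariant `k`-dimensional ℂ-subspace `L` of `ℂ^i × ℂ^j` with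
`d = dim (L ∩ (ℂ^i × 0))` can be moved, by a product `A × B` of unitary operators of the
two factors, onto the standard subspace `L_d` spanned by the standard basis vectors
`e_1, …, e_d` of `ℂ^i` (included in the first factor) and `e_1, …, e_{k-d}` of `ℂ^j`
(included in the second factor), i.e. by `e_1, …, e_d, e_{i+1}, …, e_{i+k-d}` of `ℂ^{i+j}`. -/
theorem split_invariant_normal_form (i j k : ℕ)
    (L : Submodule ℂ (EuclideanSpace ℂ (Fin i) × EuclideanSpace ℂ (Fin j)))
    (hsplit : ∀ (x : EuclideanSpace ℂ (Fin i)) (y : EuclideanSpace ℂ (Fin j)),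
        (x, y) ∈ L → (-x, y) ∈ L)
    (hdim : Module.finrank ℂ L = k)
    (d : ℕ)
    (hd : d = Module.finrank ℂ
        (L ⊓ Submodule.prod (⊤ : Submodule ℂ (EuclideanSpace ℂ (Fin i)))
            (⊥ : Submodule ℂ (EuclideanSpace ℂ (Fin j))) :
          Submodule ℂ (EuclideanSpace ℂ (Fin i) × EuclideanSpace ℂ (Fin j)))) :
    ∃ (A : EuclideanSpace ℂ (Fin i) ≃ₗᵢ[ℂ] EuclideanSpace ℂ (Fin i))
      (B : EuclideanSpace ℂ (Fin j) ≃ₗᵢ[ℂ] EuclideanSpace ℂ (Fin j)),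
      Submodule.map
          (LinearMap.prodMap A.toLinearEquiv.toLinearMap B.toLinearEquiv.toLinearMap) L =
        Submodule.prod
          (Submodule.span ℂ
            {v : EuclideanSpace ℂ (Fin i) | ∃ a : Fin i, a.val < d ∧ v = EuclideanSpace.single a 1})
          (Submodule.span ℂ
            {v : EuclideanSpace ℂ (Fin j) | ∃ b : Fin j, b.val < k - d ∧ v = EuclideanSpace.single b 1}) := by
  simpa only [initialSpan, OrthonormalBasis.coe_toBasis, EuclideanSpace.basisFun_apply] using
    split_invariant_normal_form_general (EuclideanSpace.basisFun (Fin i) ℂ).toBasis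
      (EuclideanSpace.basisFun (Fin j) ℂ).toBasis hsplit hdim hd
end

section
/- Let i, j, k, d be natural numbers with d ≤ i, d ≤ k and k − d ≤ j, and set m = i + j. Let F be the ℂ-span of the standard basis vectors e_1, …, e_i of ℂ^m and let L_d be the ℂ-span of e_1, …, e_d, e_{i+1}, …, e_{i+k−d}. A unitary operator g of ℂ^m satisfies g(F) = F and g(L_d) = L_d if and only if g maps each of the four coordinate subspaces span(e_1, …, e_d), span(e_{d+1}, …, e_i), span(e_{i+1}, …, e_{i+k−d}) and span(e_{i+k−d+1}, …, e_m) onto itself. -/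
/-!
A unitary map preserving two subspaces preserves their intersection and their orthogonal
complements. For the spans of two subfamilies of an orthonormal basis, intersections and
complements of spans correspond to those of the index sets, so the four blocks cut out by the
index sets are preserved. Conversely, each of the two subspaces is the sum of two blocks.
-/

open Module Submodule

section Module

variable {ι R M : Type*} [Semiring R] [AddCommMonoid M] [Module R M] {v : ι → M}

theorem span_image_inter_of_linearIndependent (hv : LinearIndependent R v) (s t : Set ι) :
    span R (v '' (s ∩ t)) = span R (v '' s) ⊓ span R (v '' t) := by
  simp only [Finsupp.span_image_eq_map_linearCombination, Finsupp.supported_inter, map_inf _ hv]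

variable {f : M →ₗ[R] M} {s t : Set ι}

theorem map_span_image_inter_eq_self (hv : LinearIndependent R v) (hf : Function.Injective f)
    (hs : (span R (v '' s)).map f = span R (v '' s))
    (ht : (span R (v '' t)).map f = span R (v '' t)) :
    (span R (v '' (s ∩ t))).map f = span R (v '' (s ∩ t)) := by
  rw [span_image_inter_of_linearIndependent hv, map_inf f hf, hs, ht]

theorem map_span_image_union_eq_self (hs : (span R (v '' s)).map f = span R (v '' s))
    (ht : (span R (v '' t)).map f = span R (v '' t)) :
    (span R (v '' (s ∪ t))).map f = span R (v '' (s ∪ t)) := by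
  rw [Set.image_union, span_union, Submodule.map_sup, hs, ht]

end Module

section InnerProductSpace

variable {ι 𝕜 E : Type*} [RCLike 𝕜] [NormedAddCommGroup E] [InnerProductSpace 𝕜 E]

theorem mem_orthogonal_span_iff {S : Set E} {x : E} :
    x ∈ (span 𝕜 S)ᗮ ↔ ∀ y ∈ S, inner 𝕜 y x = 0 := by
  rw [← span_singleton_le_iff_mem, ← isOrtho_iff_le, isOrtho_comm, isOrtho_span]
  simp only [Set.mem_singleton_iff, forall_eq]

theorem orthogonal_span_image_of_orthonormal {b : Basis ι 𝕜 E} (hb : Orthonormal 𝕜 b)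
    (s : Set ι) : (span 𝕜 (b '' s))ᗮ = span 𝕜 (b '' sᶜ) := by
  have inner_eq_repr (i : ι) (x : E) : inner 𝕜 (b i) x = b.repr x i := by
    simpa only [b.linearCombination_repr] using hb.inner_right_finsupp (b.repr x) i
  ext x
  simp only [mem_orthogonal_span_iff, Set.forall_mem_image, inner_eq_repr, b.mem_span_image,
    Set.subset_compl_iff_disjoint_left, Set.disjoint_left, Finset.mem_coe,
    Finsupp.notMem_support_iff]

theorem map_span_image_compl_eq_self {b : Basis ι 𝕜 E} (hb : Orthonormal 𝕜 b)
    {g : E ≃ₗᵢ[𝕜] E} {s : Set ι}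
    (hs : (span 𝕜 (b '' s)).map g.toLinearEquiv.toLinearMap = span 𝕜 (b '' s)) :
    (span 𝕜 (b '' sᶜ)).map g.toLinearEquiv.toLinearMap = span 𝕜 (b '' sᶜ) := by
  rw [← orthogonal_span_image_of_orthonormal hb, map_orthogonal_equiv, hs]

theorem stabilizer_of_flag_is_block_subgroup_general {b : Basis ι 𝕜 E} (hb : Orthonormal 𝕜 b)
    (g : E ≃ₗᵢ[𝕜] E) (s t : Set ι) :
    ((span 𝕜 (b '' s)).map g.toLinearEquiv.toLinearMap = span 𝕜 (b '' s) ∧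
      (span 𝕜 (b '' t)).map g.toLinearEquiv.toLinearMap = span 𝕜 (b '' t)) ↔
    ((span 𝕜 (b '' (s ∩ t))).map g.toLinearEquiv.toLinearMap = span 𝕜 (b '' (s ∩ t)) ∧
      (span 𝕜 (b '' (s \ t))).map g.toLinearEquiv.toLinearMap = span 𝕜 (b '' (s \ t)) ∧
      (span 𝕜 (b '' (t \ s))).map g.toLinearEquiv.toLinearMap = span 𝕜 (b '' (t \ s)) ∧
      (span 𝕜 (b '' (s ∪ t)ᶜ)).map g.toLinearEquiv.toLinearMap = span 𝕜 (b '' (s ∪ t)ᶜ)) := by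
  constructor
  · rintro ⟨hs, ht⟩
    have hs_compl := map_span_image_compl_eq_self hb hs
    have ht_compl := map_span_image_compl_eq_self hb ht
    have hb_indep := b.linearIndependent
    rw [Set.compl_union]
    exact ⟨map_span_image_inter_eq_self hb_indep g.injective hs ht,
      map_span_image_inter_eq_self hb_indep g.injective hs ht_compl,
      map_span_image_inter_eq_self hb_indep g.injective ht hs_compl,
      map_span_image_inter_eq_self hb_indep g.injective hs_compl ht_compl⟩
  · rintro ⟨hst, hs, ht, -⟩
    have hs_union := map_span_image_union_eq_self hst hs
    have ht_union := map_span_image_union_eq_self hst ht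
    rw [Set.inter_union_sdiff] at hs_union
    rw [Set.inter_comm, Set.inter_union_sdiff] at ht_union
    exact ⟨hs_union, ht_union⟩

end InnerProductSpace

theorem setOf_eq_single_eq_image_basisFun {ι 𝕜 : Type*} [RCLike 𝕜] [Fintype ι]
    [DecidableEq ι] (p : ι → Prop) :
    {v : EuclideanSpace 𝕜 ι | ∃ a, p a ∧ v = EuclideanSpace.single a 1} =
      (EuclideanSpace.basisFun ι 𝕜).toBasis '' {a | p a} := by
  simp only [OrthonormalBasis.coe_toBasis, EuclideanSpace.basisFun_apply, Set.image,
    Set.mem_ofPred_eq, eq_comm]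

/-- Let `m = i + j`, `F` the span of the first `i` standard basis vectors of
`ℂ^m`, and `L_d` the span of `e_1, …, e_d, e_{i+1}, …, e_{i+k-d}` (where `d ≤ i`, `d ≤ k`,
`k - d ≤ j`). A unitary operator `g` of `ℂ^m` satisfies `g(F) = F` and `g(L_d) = L_d` if
and only if `g` maps each of the four coordinate subspaces `span(e_1, …, e_d)`,
`span(e_{d+1}, …, e_i)`, `span(e_{i+1}, …, e_{i+k-d})` and `span(e_{i+k-d+1}, …, e_m)`
onto itself. -/
theorem stabilizer_of_flag_is_block_subgroup (i j k d : ℕ)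
    (hdi : d ≤ i) (hdk : d ≤ k) (hkd : k - d ≤ j)
    (g : EuclideanSpace ℂ (Fin (i + j)) ≃ₗᵢ[ℂ] EuclideanSpace ℂ (Fin (i + j))) :
    (Submodule.map g.toLinearEquiv.toLinearMap
          (Submodule.span ℂ {v : EuclideanSpace ℂ (Fin (i + j)) |
            ∃ a : Fin (i + j), a.val < i ∧ v = EuclideanSpace.single a 1}) =
        Submodule.span ℂ {v : EuclideanSpace ℂ (Fin (i + j)) |
            ∃ a : Fin (i + j), a.val < i ∧ v = EuclideanSpace.single a 1} ∧
      Submodule.map g.toLinearEquiv.toLinearMap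
          (Submodule.span ℂ {v : EuclideanSpace ℂ (Fin (i + j)) |
            ∃ a : Fin (i + j), (a.val < d ∨ (i ≤ a.val ∧ a.val < i + (k - d))) ∧
              v = EuclideanSpace.single a 1}) =
        Submodule.span ℂ {v : EuclideanSpace ℂ (Fin (i + j)) |
            ∃ a : Fin (i + j), (a.val < d ∨ (i ≤ a.val ∧ a.val < i + (k - d))) ∧
              v = EuclideanSpace.single a 1}) ↔
    (Submodule.map g.toLinearEquiv.toLinearMap
          (Submodule.span ℂ {v : EuclideanSpace ℂ (Fin (i + j)) |
            ∃ a : Fin (i + j), a.val < d ∧ v = EuclideanSpace.single a 1}) =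
        Submodule.span ℂ {v : EuclideanSpace ℂ (Fin (i + j)) |
            ∃ a : Fin (i + j), a.val < d ∧ v = EuclideanSpace.single a 1} ∧
      Submodule.map g.toLinearEquiv.toLinearMap
          (Submodule.span ℂ {v : EuclideanSpace ℂ (Fin (i + j)) |
            ∃ a : Fin (i + j), (d ≤ a.val ∧ a.val < i) ∧ v = EuclideanSpace.single a 1}) =
        Submodule.span ℂ {v : EuclideanSpace ℂ (Fin (i + j)) |
            ∃ a : Fin (i + j), (d ≤ a.val ∧ a.val < i) ∧ v = EuclideanSpace.single a 1} ∧
      Submodule.map g.toLinearEquiv.toLinearMap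
          (Submodule.span ℂ {v : EuclideanSpace ℂ (Fin (i + j)) |
            ∃ a : Fin (i + j), (i ≤ a.val ∧ a.val < i + (k - d)) ∧
              v = EuclideanSpace.single a 1}) =
        Submodule.span ℂ {v : EuclideanSpace ℂ (Fin (i + j)) |
            ∃ a : Fin (i + j), (i ≤ a.val ∧ a.val < i + (k - d)) ∧
              v = EuclideanSpace.single a 1} ∧
      Submodule.map g.toLinearEquiv.toLinearMap
          (Submodule.span ℂ {v : EuclideanSpace ℂ (Fin (i + j)) |
            ∃ a : Fin (i + j), i + (k - d) ≤ a.val ∧ v = EuclideanSpace.single a 1}) =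
        Submodule.span ℂ {v : EuclideanSpace ℂ (Fin (i + j)) |
            ∃ a : Fin (i + j), i + (k - d) ≤ a.val ∧ v = EuclideanSpace.single a 1}) := by
  let s : Set (Fin (i + j)) := {a | a.val < i}
  let t : Set (Fin (i + j)) := {a | a.val < d ∨ (i ≤ a.val ∧ a.val < i + (k - d))}
  have inter_eq : s ∩ t = {a | a.val < d} := by
    ext; simp only [s, t, Set.mem_inter_iff, Set.mem_ofPred_eq]; omega
  have sdiff_eq : s \ t = {a | d ≤ a.val ∧ a.val < i} := by
    ext; simp only [s, t, Set.mem_sdiff, Set.mem_ofPred_eq]; omega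
  have sdiff_swap_eq : t \ s = {a | i ≤ a.val ∧ a.val < i + (k - d)} := by
    ext; simp only [s, t, Set.mem_sdiff, Set.mem_ofPred_eq]; omega
  have compl_eq : (s ∪ t)ᶜ = {a | i + (k - d) ≤ a.val} := by
    ext; simp only [s, t, Set.mem_compl_iff, Set.mem_union, Set.mem_ofPred_eq]; omega
  have orthonormal_basisFun : Orthonormal ℂ (EuclideanSpace.basisFun (Fin (i + j)) ℂ).toBasis := by
    simpa only [OrthonormalBasis.coe_toBasis] using OrthonormalBasis.orthonormal _
  simp only [setOf_eq_single_eq_image_basisFun, ← inter_eq, ← sdiff_eq, ← sdiff_swap_eq, ← compl_eq]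
  exact stabilizer_of_flag_is_block_subgroup_general orthonormal_basisFun g s t
end
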